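/- For every integer N ≥ 1 and for z = 1 as well as z = −1, the Bose–Hubbard Hamiltonian at its exceptional point is nilpotent of index exactly N: H_BH(z)^N = 0 while H_BH(z)^{N−1} ≠ 0. In particular its spectrum is fully degenerate (all N eigenvalues coincide at 0) and, for N ≥ 2, H_BH(±1) is not diagonalizable. -/

import Mathlib

/-!
Write `N = n + 1`.  Attach to a vector `v` the polynomial `∑ k, √(binom(n,k)) v_k X ^ k`.  In these
coordinates `H_BH(z)` becomes the first-order differential operator
`p ↦ (1 + 2 c X - X²) p' + n (X - c) p` with `c = i z`.  At `z² = 1` we have `c² = -1`, so the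
quadratic acquires a double root at `c` and the operator reads
`p ↦ (X - c) (n p - (X - c) p')`.  It therefore raises the order of vanishing at `c` by at least
one; after `n + 1` steps a polynomial of degree at most `n` has become zero, whereas `n` steps take
`1` to `n! (X - c) ^ n`.
-/

open Matrix Polynomial Finset

/-- off-diagonal coupling `√((N−1−k)(k+1))`. -/
noncomputable def gCoup (N k : ℕ) : ℝ := Real.sqrt (((N - 1 - k) * (k + 1) : ℕ))

/-- the non-Hermitian Bose–Hubbard Hamiltonian `H_BH(z)`. -/
noncomputable def HBH (N : ℕ) (z : ℂ) : Matrix (Fin N) (Fin N) ℂ :=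
  fun k l =>
    if (k : ℕ) = (l : ℕ) then -Complex.I * (((N : ℤ) - 1 - 2 * (k : ℕ) : ℤ) : ℂ) * z
    else if (l : ℕ) = (k : ℕ) + 1 then (gCoup N k : ℂ)
    else if (k : ℕ) = (l : ℕ) + 1 then (gCoup N l : ℂ)
    else 0

/-- the EP limit of the discrete anharmonic-oscillator Hamiltonian `H_AO`. -/
noncomputable def HAO (N : ℕ) : Matrix (Fin N) (Fin N) ℂ :=
  fun k l =>
    if (k : ℕ) = (l : ℕ) then -(((N : ℤ) - 1 - 2 * (k : ℕ) : ℤ) : ℂ)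
    else if (l : ℕ) = (k : ℕ) + 1 then (gCoup N k : ℂ)
    else if (k : ℕ) = (l : ℕ) + 1 then -(gCoup N l : ℂ)
    else 0

/-- the nilpotent Jordan block `J`. -/
noncomputable def Jmat (N : ℕ) : Matrix (Fin N) (Fin N) ℂ :=
  fun k l => if (l : ℕ) = (k : ℕ) + 1 then 1 else 0

/-- the Pascal-triangle matrix `P`. -/
noncomputable def Pmat (N : ℕ) : Matrix (Fin N) (Fin N) ℂ :=
  fun m q => ((N - 1 - (m : ℕ)).choose (q : ℕ) : ℂ)

/-- the diagonal factor `D` with `D_{k,k} = i^k·√(binom(N−1,k))`. -/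
noncomputable def Dmat (N : ℕ) : Matrix (Fin N) (Fin N) ℂ :=
  Matrix.diagonal fun k => Complex.I ^ (k : ℕ) * (Real.sqrt ((N - 1).choose (k : ℕ)) : ℂ)

/-- the diagonal factor `G` with `G_{k,k} = (−i)^{N−1−k}·(N−1−k)!`. -/
noncomputable def Gmat (N : ℕ) : Matrix (Fin N) (Fin N) ℂ :=
  Matrix.diagonal fun k => (-Complex.I) ^ (N - 1 - (k : ℕ)) * ((N - 1 - (k : ℕ)).factorial : ℂ)

/-- the Bose–Hubbard transition matrix `Q_BH = D·P·G`. -/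
noncomputable def QBH (N : ℕ) : Matrix (Fin N) (Fin N) ℂ := Dmat N * Pmat N * Gmat N

/-- the diagonal factor `C` with `C_{k,k} = √(binom(N−1,k))`. -/
noncomputable def Cmat (N : ℕ) : Matrix (Fin N) (Fin N) ℂ :=
  Matrix.diagonal fun k => (Real.sqrt ((N - 1).choose (k : ℕ)) : ℂ)

/-- the diagonal factor `F` with `F_{k,k} = (−1)^{N−1−k}·(N−1−k)!`. -/
noncomputable def Fmat (N : ℕ) : Matrix (Fin N) (Fin N) ℂ :=
  Matrix.diagonal fun k => (-1 : ℂ) ^ (N - 1 - (k : ℕ)) * ((N - 1 - (k : ℕ)).factorial : ℂ)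

/-- the anharmonic-oscillator transition matrix `Q_AO = C·P·F`. -/
noncomputable def QAO (N : ℕ) : Matrix (Fin N) (Fin N) ℂ := Cmat N * Pmat N * Fmat N

/-- `β = −1 + i`. -/
noncomputable def betaC : ℂ := -1 + Complex.I

/-- the diagonal factor `B` with `B_{k,k} = (−β)^{−k}`. -/
noncomputable def Bmat (N : ℕ) : Matrix (Fin N) (Fin N) ℂ :=
  Matrix.diagonal fun k => ((-betaC) ^ (k : ℕ))⁻¹

/-- the diagonal factor `A` with `A_{k,k} = β^k`. -/
noncomputable def Amat (N : ℕ) : Matrix (Fin N) (Fin N) ℂ :=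
  Matrix.diagonal fun k => betaC ^ (k : ℕ)

/-- the upper-triangular real matrix `R` with
`R_{n,n+q} = √(binom(n+q,n)·binom(N−1−n,q))`. -/
noncomputable def Rmat (N : ℕ) : Matrix (Fin N) (Fin N) ℂ :=
  fun n k =>
    if (n : ℕ) ≤ (k : ℕ) then
      (Real.sqrt (((k : ℕ).choose (n : ℕ)) * ((N - 1 - (n : ℕ)).choose ((k : ℕ) - (n : ℕ)))) : ℂ)
    else 0

/-- the transition-matrix product `S = B·R·A`. -/
noncomputable def Smat (N : ℕ) : Matrix (Fin N) (Fin N) ℂ := Bmat N * Rmat N * Amat N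

/-- the discrete anharmonic-oscillator Hamiltonian `H_AO(γ)` with coupling parameter `γ`. -/
noncomputable def HAOg (N : ℕ) (γ : ℝ) : Matrix (Fin N) (Fin N) ℝ :=
  fun k l =>
    if (k : ℕ) = (l : ℕ) then -((N : ℝ) - 1 - 2 * (k : ℕ))
    else if (l : ℕ) = (k : ℕ) + 1 then
      Real.sqrt ((((N - 1 - (k : ℕ)) * ((k : ℕ) + 1) : ℕ)) * (1 - γ))
    else if (k : ℕ) = (l : ℕ) + 1 then
      -Real.sqrt ((((N - 1 - (l : ℕ)) * ((l : ℕ) + 1) : ℕ)) * (1 - γ))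
    else 0

/-- the exchange (parity) matrix `Π`. -/
noncomputable def PiMat (N : ℕ) : Matrix (Fin N) (Fin N) ℂ :=
  fun k l => if (k : ℕ) + (l : ℕ) = N - 1 then 1 else 0

lemma spectrum_eq_singleton_zero_of_isNilpotent {K A : Type*} [Field K] [Ring A] [Nontrivial A]
    [Algebra K A] {a : A} (ha : IsNilpotent a) : spectrum K a = {0} := by
  obtain ⟨m, hm⟩ := ha
  refine Set.Subset.antisymm (fun x hx => ?_) ?_
  · have hxm : x ^ m ∈ spectrum K (a ^ m) := spectrum.pow_mem_pow a m hx
    rw [hm, spectrum.zero_eq, Set.mem_singleton_iff] at hxm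
    exact eq_zero_of_pow_eq_zero hxm
  · rw [Set.singleton_subset_iff, spectrum.zero_mem_iff]
    exact fun hu => not_isUnit_zero (hm ▸ hu.pow m)

lemma eq_zero_of_isNilpotent_of_eq_conj_diagonal {ι R : Type*} [Fintype ι] [DecidableEq ι]
    [CommRing R] [IsReduced R] {M T : Matrix ι ι R} {d : ι → R} (hM : IsNilpotent M)
    (hT : IsUnit T) (hMd : M = T * diagonal d * T⁻¹) : M = 0 := by
  obtain ⟨m, hm⟩ := hM
  obtain ⟨u, rfl⟩ := hT
  rw [← coe_units_inv] at hMd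
  have hd : d ^ m = 0 := by
    rwa [hMd, Units.conj_pow, Units.mul_left_eq_zero, Units.mul_right_eq_zero, diagonal_pow,
      diagonal_eq_zero] at hm
  rw [hMd, diagonal_eq_zero.2 (eq_zero_of_pow_eq_zero hd), mul_zero, zero_mul]

section BargmannHamiltonian

variable {R : Type*} [CommRing R]

/-- The operator `p ↦ (1 + 2 c X - X²) p' + n (X - c) p` on polynomials.  For `c = i z` it
represents the Hamiltonian `H_BH(z)` of dimension `n + 1` in the coordinates `bargmann n`. -/
noncomputable def bargmannHamiltonian (n : ℕ) (c : R) : Module.End R R[X] :=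
  LinearMap.mulLeft R (1 + C (2 * c) * X - X ^ 2) ∘ₗ derivative
    + LinearMap.mulLeft R ((n : R[X]) * (X - C c))

lemma bargmannHamiltonian_apply (n : ℕ) (c : R) (p : R[X]) :
    bargmannHamiltonian n c p
      = (1 + C (2 * c) * X - X ^ 2) * derivative p + (n : R[X]) * (X - C c) * p :=
  rfl

-- At `j = 0` the truncated exponent `j - 1` is harmless, since its coefficient is `0`.
lemma bargmannHamiltonian_X_pow (n : ℕ) (c : R) (j : ℕ) :
    bargmannHamiltonian n c (X ^ j)
      = C (j : R) * X ^ (j - 1) + C (c * (2 * j - n)) * X ^ j + C (n - j : R) * X ^ (j + 1) := by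
  rw [bargmannHamiltonian_apply, derivative_X_pow]
  simp only [C_mul, C_sub, C_ofNat, map_natCast]
  rcases j with _ | j
  · simp only [Nat.cast_zero]
    ring
  · simp only [Nat.add_sub_cancel]
    ring

lemma coeff_bargmannHamiltonian_X_pow (n : ℕ) (c : R) (j k : ℕ) :
    (bargmannHamiltonian n c (X ^ j)).coeff k
      = if k = j then c * (2 * j - n) else if j = k + 1 then (j : R)
        else if k = j + 1 then (n - j : R) else 0 := by
  simp only [bargmannHamiltonian_X_pow, coeff_add, coeff_C_mul, coeff_X_pow]
  have hlower : (j : R) * (if k = j - 1 then 1 else 0) = if j = k + 1 then (j : R) else 0 := by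
    rcases j with _ | j
    · simp
    · simp [eq_comm]
  rw [hlower]
  split_ifs <;> first | omega | simp

lemma bargmannHamiltonian_apply_of_sq_eq_neg_one {c : R} (hc : c ^ 2 = -1) (n : ℕ)
    (p : R[X]) :
    bargmannHamiltonian n c p = (X - C c) * ((n : R[X]) * p - (X - C c) * derivative p) := by
  have hC : (C c : R[X]) ^ 2 = -1 := by rw [← C_pow, hc, C_neg, C_1]
  rw [bargmannHamiltonian_apply, C_mul, C_ofNat]
  linear_combination derivative p * hC

lemma X_sub_C_pow_succ_dvd_bargmannHamiltonian {c : R} (hc : c ^ 2 = -1) (n : ℕ) {m : ℕ}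
    {p : R[X]} (hp : (X - C c) ^ m ∣ p) : (X - C c) ^ (m + 1) ∣ bargmannHamiltonian n c p := by
  have hp' : (X - C c) ^ m ∣ (X - C c) * derivative p :=
    calc (X - C c) ^ m ∣ (X - C c) ^ (m - 1 + 1) := pow_dvd_pow _ (by omega)
      _ = (X - C c) * (X - C c) ^ (m - 1) := pow_succ' _ _
      _ ∣ (X - C c) * derivative p := mul_dvd_mul_left _ (pow_sub_one_dvd_derivative_of_pow_dvd hp)
  rw [bargmannHamiltonian_apply_of_sq_eq_neg_one hc, pow_succ']
  exact mul_dvd_mul_left _ (dvd_sub (hp.mul_left _) hp')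

lemma X_sub_C_pow_dvd_bargmannHamiltonian_pow {c : R} (hc : c ^ 2 = -1) (n m : ℕ) (p : R[X]) :
    (X - C c) ^ m ∣ (bargmannHamiltonian n c ^ m) p := by
  induction m with
  | zero => simp
  | succ m ih =>
    rw [pow_succ' (bargmannHamiltonian n c), Module.End.mul_apply]
    exact X_sub_C_pow_succ_dvd_bargmannHamiltonian hc n ih

lemma bargmannHamiltonian_X_sub_C_pow {c : R} (hc : c ^ 2 = -1) (n m : ℕ) :
    bargmannHamiltonian n c ((X - C c) ^ m) = (n - m : R) • (X - C c) ^ (m + 1) := by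
  rw [bargmannHamiltonian_apply_of_sq_eq_neg_one hc, derivative_X_sub_C_pow, smul_eq_C_mul, C_sub,
    C_eq_natCast, C_eq_natCast]
  rcases m with _ | m
  · simp only [Nat.cast_zero]
    ring
  · simp only [Nat.add_sub_cancel]
    ring

lemma bargmannHamiltonian_pow_one {c : R} (hc : c ^ 2 = -1) (n m : ℕ) :
    (bargmannHamiltonian n c ^ m) 1 = (n.descFactorial m : R) • (X - C c) ^ m := by
  induction m with
  | zero => simp
  | succ m ih =>
    have hcoeff : (n.descFactorial m : R) * (n - m) = n.descFactorial (m + 1) := by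
      rcases le_or_gt m n with hmn | hmn
      · rw [Nat.descFactorial_succ, Nat.cast_mul, Nat.cast_sub hmn, mul_comm]
      · simp [Nat.descFactorial_eq_zero_iff_lt.2, hmn]
    rw [pow_succ', Module.End.mul_apply, ih, map_smul, bargmannHamiltonian_X_sub_C_pow hc,
      smul_smul, hcoeff]

end BargmannHamiltonian

lemma gCoup_mul_sqrt_choose (n k : ℕ) :
    gCoup (n + 1) k * √(n.choose k) = (k + 1 : ℕ) * √(n.choose (k + 1)) := by
  have h : (n - k) * (k + 1) * n.choose k = (k + 1) ^ 2 * n.choose (k + 1) := by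
    linear_combination (k + 1) * (Nat.choose_succ_right_eq n k).symm
  have hk : ((k + 1 : ℕ) : ℝ) = √((k + 1) ^ 2 : ℕ) := by simp [-Nat.cast_add]
  rw [gCoup, Nat.add_sub_cancel, hk, ← Real.sqrt_mul (Nat.cast_nonneg _),
    ← Real.sqrt_mul (Nat.cast_nonneg _), ← Nat.cast_mul, ← Nat.cast_mul, h]

lemma gCoup_mul_sqrt_choose_succ (n k : ℕ) :
    gCoup (n + 1) k * √(n.choose (k + 1)) = (n - k : ℕ) * √(n.choose k) := by
  have h : (n - k) * (k + 1) * n.choose (k + 1) = (n - k) ^ 2 * n.choose k := by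
    linear_combination (n - k) * Nat.choose_succ_right_eq n k
  have hk : ((n - k : ℕ) : ℝ) = √((n - k) ^ 2 : ℕ) := by simp
  rw [gCoup, Nat.add_sub_cancel, hk, ← Real.sqrt_mul (Nat.cast_nonneg _),
    ← Real.sqrt_mul (Nat.cast_nonneg _), ← Nat.cast_mul, ← Nat.cast_mul, h]

/-- The Bargmann polynomial `∑ k, √(binom(n,k)) v_k X ^ k` of a vector `v` of dimension `n + 1`;
in these coordinates `H_BH(z)` acts as a first-order differential operator. -/
noncomputable def bargmann (n : ℕ) : (Fin (n + 1) → ℂ) →ₗ[ℂ] ℂ[X] :=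
  Fintype.linearCombination ℂ fun k => monomial (k : ℕ) (√(n.choose k) : ℂ)

section Bargmann

variable {n : ℕ}

lemma bargmann_single_one (j : Fin (n + 1)) :
    bargmann n (Pi.single j 1) = (√(n.choose j) : ℂ) • X ^ (j : ℕ) := by
  simp [bargmann, Fintype.linearCombination_apply_single, smul_X_eq_monomial]

lemma coeff_bargmann (v : Fin (n + 1) → ℂ) (k : Fin (n + 1)) :
    (bargmann n v).coeff k = v k * √(n.choose k) := by
  simp [bargmann, Fintype.linearCombination_apply, coeff_monomial, Fin.val_inj]

lemma natDegree_bargmann_le (v : Fin (n + 1) → ℂ) : (bargmann n v).natDegree ≤ n := by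
  rw [bargmann, Fintype.linearCombination_apply]
  exact natDegree_sum_le_of_forall_le _ _ fun k _ =>
    (natDegree_smul_le _ _).trans ((natDegree_monomial_le _).trans (by omega))

lemma bargmann_injective : Function.Injective (bargmann n) := by
  refine (injective_iff_map_eq_zero _).2 fun v hv => funext fun k => ?_
  have hk : v k * (√(n.choose k) : ℂ) = 0 := by rw [← coeff_bargmann, hv, coeff_zero]
  have hchoose : 0 < n.choose k := Nat.choose_pos (by omega)
  simpa [hchoose.ne'] using hk

lemma HBH_mul_sqrt_choose (z : ℂ) (k j : Fin (n + 1)) :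
    HBH (n + 1) z k j * √(n.choose k)
      = √(n.choose j) * (bargmannHamiltonian n (Complex.I * z) (X ^ (j : ℕ))).coeff k := by
  rw [coeff_bargmannHamiltonian_X_pow, HBH]
  split_ifs with hdiag hsuper hsub
  · rw [hdiag]
    push_cast
    ring
  · rw [hsuper, mul_comm (√_ : ℂ)]
    exact_mod_cast gCoup_mul_sqrt_choose n k
  · rw [hsub, mul_comm (√_ : ℂ), ← Nat.cast_sub (by omega)]
    exact_mod_cast gCoup_mul_sqrt_choose_succ n j
  · simp

lemma bargmann_HBH_mulVec (z : ℂ) (v : Fin (n + 1) → ℂ) :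
    bargmann n (HBH (n + 1) z *ᵥ v) = bargmannHamiltonian n (Complex.I * z) (bargmann n v) := by
  suffices bargmann n ∘ₗ (HBH (n + 1) z).mulVecLin
      = bargmannHamiltonian n (Complex.I * z) ∘ₗ bargmann n from LinearMap.congr_fun this v
  refine LinearMap.pi_ext' fun j => LinearMap.ext_ring (Polynomial.ext fun m => ?_)
  simp only [LinearMap.comp_apply, LinearMap.single_apply, mulVecLin_apply, mulVec_single_one,
    bargmann_single_one, map_smul, coeff_smul, smul_eq_mul]
  rcases le_or_gt m n with hm | hm
  · exact (coeff_bargmann _ ⟨m, by omega⟩).trans (HBH_mul_sqrt_choose z ⟨m, by omega⟩ j)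
  · rw [coeff_eq_zero_of_natDegree_lt ((natDegree_bargmann_le _).trans_lt hm),
      coeff_bargmannHamiltonian_X_pow]
    split_ifs with hdiag hsuper hsub
    · omega
    · omega
    -- Degree `n` is preserved because the raising coefficient `n - j` vanishes at `j = n`.
    · rw [show (j : ℕ) = n by omega, sub_self, mul_zero]
    · rw [mul_zero]

lemma bargmann_HBH_pow_mulVec (z : ℂ) (m : ℕ) (v : Fin (n + 1) → ℂ) :
    bargmann n (HBH (n + 1) z ^ m *ᵥ v)
      = (bargmannHamiltonian n (Complex.I * z) ^ m) (bargmann n v) := by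
  induction m with
  | zero => simp
  | succ m ih =>
    rw [pow_succ', ← mulVec_mulVec, bargmann_HBH_mulVec, ih, pow_succ', Module.End.mul_apply]

end Bargmann

lemma I_mul_sq_eq_neg_one {z : ℂ} (hz : z ^ 2 = 1) : (Complex.I * z) ^ 2 = -1 := by
  rw [mul_pow, hz, Complex.I_sq, mul_one]

lemma HBH_pow_eq_zero {z : ℂ} (hz : z ^ 2 = 1) (n : ℕ) : HBH (n + 1) z ^ (n + 1) = 0 := by
  refine ext_of_mulVec_single fun j => bargmann_injective ?_
  rw [zero_mulVec, map_zero]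
  have hdvd : (X - C (Complex.I * z)) ^ (n + 1)
      ∣ bargmann n (HBH (n + 1) z ^ (n + 1) *ᵥ Pi.single j 1) := by
    rw [bargmann_HBH_pow_mulVec]
    exact X_sub_C_pow_dvd_bargmannHamiltonian_pow (I_mul_sq_eq_neg_one hz) n (n + 1) _
  refine eq_zero_of_dvd_of_natDegree_lt hdvd ?_
  rw [natDegree_pow, natDegree_X_sub_C, mul_one]
  exact Nat.lt_succ_of_le (natDegree_bargmann_le _)

lemma HBH_pow_ne_zero {z : ℂ} (hz : z ^ 2 = 1) (n : ℕ) : HBH (n + 1) z ^ n ≠ 0 := by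
  intro h
  have hone : bargmann n (Pi.single 0 1) = 1 := by simp [bargmann_single_one]
  have hpow : bargmann n (HBH (n + 1) z ^ n *ᵥ Pi.single 0 1)
      = (n.factorial : ℂ) • (X - C (Complex.I * z)) ^ n := by
    rw [bargmann_HBH_pow_mulVec, hone, bargmannHamiltonian_pow_one (I_mul_sq_eq_neg_one hz),
      Nat.descFactorial_self]
  rw [h, zero_mulVec, map_zero] at hpow
  exact smul_ne_zero (Nat.cast_ne_zero.2 n.factorial_ne_zero)
    (pow_ne_zero n (X_sub_C_ne_zero _)) hpow.symm

/-- at `z = ±1` the Bose–Hubbard Hamiltonian is nilpotent of index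
exactly `N`, its spectrum is `{0}`, and (for `N ≥ 2`) it is not diagonalizable. -/
theorem bh_ep_nilpotent (N : ℕ) (hN : 1 ≤ N) (z : ℂ) (hz : z = 1 ∨ z = -1) :
    HBH N z ^ N = 0 ∧ HBH N z ^ (N - 1) ≠ 0 ∧
      spectrum ℂ (HBH N z) = {0} ∧
      (2 ≤ N →
        ¬ ∃ (T : Matrix (Fin N) (Fin N) ℂ) (d : Fin N → ℂ),
          IsUnit T ∧ HBH N z = T * Matrix.diagonal d * T⁻¹) := by
  obtain ⟨n, rfl⟩ : ∃ n, N = n + 1 := ⟨N - 1, by omega⟩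
  have hz2 : z ^ 2 = 1 := sq_eq_one_iff.2 hz
  have hnil : IsNilpotent (HBH (n + 1) z) := ⟨n + 1, HBH_pow_eq_zero hz2 n⟩
  have hne : HBH (n + 1) z ^ n ≠ 0 := HBH_pow_ne_zero hz2 n
  refine ⟨HBH_pow_eq_zero hz2 n, hne, spectrum_eq_singleton_zero_of_isNilpotent hnil, ?_⟩
  rintro hN2 ⟨T, d, hT, hTd⟩
  have hzero : HBH (n + 1) z = 0 := eq_zero_of_isNilpotent_of_eq_conj_diagonal hnil hT hTd
  exact hne (by rw [hzero, zero_pow (by omega)])
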